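/- arXiv:1812.05684 — 6 statements merged into one kernel-verified Lean document; each statement's English description precedes it below -/
import Mathlib

section
/- For all positive integers n₁, n₂ and k, writing A = 10n₁, B = 10n₂−1, and N = 4k·A·B − 10(n₁+n₂) + 1 (so that N = 4kAB − A − B > 0), the rational number 4/N equals 1/(kAB) + 1/(kA·N) + 1/(kB·N). -/
/-!
Dividing `n + a + b = m k a b` by `k a b n` gives `m / n = 1 / (k a b) + 1 / (k b n) + 1 / (k a n)`.
For `a = 10 n₁` and `b = 10 n₂ - 1` the integers `b` and `n = m k a b - a - b` are congruent to `-1`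
and `1` modulo `10`, so they never vanish, whatever the signs of the parameters.
-/

theorem div_eq_add_one_div_of_add_add_eq {K : Type*} [Field K] {m k a b n : K}
    (hk : k ≠ 0) (ha : a ≠ 0) (hb : b ≠ 0) (hn : n ≠ 0) (h : n + a + b = m * k * a * b) :
    m / n = 1 / (k * a * b) + 1 / (k * a * n) + 1 / (k * b * n) := by
  calc
    m / n = m * k * a * b / (k * a * b * n) := by field_simp
    _ = (n + a + b) / (k * a * b * n) := by rw [h]
    _ = 1 / (k * a * b) + 1 / (k * a * n) + 1 / (k * b * n) := by field_simp; ring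

theorem erdos_straus_identity_11_general {K : Type*} [Field K] [CharZero K] (n₁ n₂ k : ℤ)
    (h₁ : n₁ ≠ 0) (hk : k ≠ 0) :
    (4 : K) / ((4 * k * (10 * n₁) * (10 * n₂ - 1) - 10 * (n₁ + n₂) + 1 : ℤ)) =
      1 / ((k : K) * ((10 * n₁ : ℤ)) * ((10 * n₂ - 1 : ℤ))) +
        1 / ((k : K) * ((10 * n₁ : ℤ)) *
          ((4 * k * (10 * n₁) * (10 * n₂ - 1) - 10 * (n₁ + n₂) + 1 : ℤ))) +
        1 / ((k : K) * ((10 * n₂ - 1 : ℤ)) *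
          ((4 * k * (10 * n₁) * (10 * n₂ - 1) - 10 * (n₁ + n₂) + 1 : ℤ))) := by
  have hA : 10 * n₁ ≠ 0 := by omega
  have hB : 10 * n₂ - 1 ≠ 0 := by omega
  have hN : 4 * k * (10 * n₁) * (10 * n₂ - 1) - 10 * (n₁ + n₂) + 1 ≠ 0 := by
    have hmod : 4 * k * (10 * n₁) * (10 * n₂ - 1) - 10 * (n₁ + n₂) + 1 =
        10 * (4 * k * n₁ * (10 * n₂ - 1) - (n₁ + n₂)) + 1 := by ring
    omega
  refine div_eq_add_one_div_of_add_add_eq (Int.cast_ne_zero.mpr hk) (Int.cast_ne_zero.mpr hA)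
    (Int.cast_ne_zero.mpr hB) (Int.cast_ne_zero.mpr hN) ?_
  push_cast
  ring

theorem erdos_straus_identity_11 (n₁ n₂ k : ℤ) (h₁ : 0 < n₁) (h₂ : 0 < n₂)
    (hk : 0 < k) :
    (4 : ℚ) / ((4 * k * (10 * n₁) * (10 * n₂ - 1) - 10 * (n₁ + n₂) + 1 : ℤ)) =
      1 / ((k : ℚ) * ((10 * n₁ : ℤ)) * ((10 * n₂ - 1 : ℤ))) +
        1 / ((k : ℚ) * ((10 * n₁ : ℤ)) *
          ((4 * k * (10 * n₁) * (10 * n₂ - 1) - 10 * (n₁ + n₂) + 1 : ℤ))) +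
        1 / ((k : ℚ) * ((10 * n₂ - 1 : ℤ)) *
          ((4 * k * (10 * n₁) * (10 * n₂ - 1) - 10 * (n₁ + n₂) + 1 : ℤ))) :=
  erdos_straus_identity_11_general n₁ n₂ k h₁.ne' hk.ne'
end

section
/- For all positive integers n₁, n₂ and k, writing A = 10n₁−9, B = 10n₂−2, and N = 4k·A·B − 10(n₁+n₂) + 11 (so that N = 4kAB − A − B > 0), the rational number 4/N equals 1/(kAB) + 1/(kA·N) + 1/(kB·N). -/
theorem div_eq_one_div_add_one_div_add_one_div_of_add_add_eq {K : Type*} [Field K]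
    {t k a b N : K} (hk : k ≠ 0) (ha : a ≠ 0) (hb : b ≠ 0) (hN : N ≠ 0)
    (h : N + a + b = t * k * a * b) :
    t / N = 1 / (k * a * b) + 1 / (k * a * N) + 1 / (k * b * N) :=
  calc
    t / N = (t * k * a * b) / (k * a * b * N) := by field_simp
    _ = (N + a + b) / (k * a * b * N) := by rw [h]
    _ = 1 / (k * a * b) + 1 / (k * a * N) + 1 / (k * b * N) := by field_simp; ring

theorem erdos_straus_identity_12_general {K : Type*} [Field K] [CharZero K] (n₁ n₂ : ℤ) {k : ℤ}
    (hk : k ≠ 0) :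
    (4 : K) / ((4 * k * (10 * n₁ - 9) * (10 * n₂ - 2) - 10 * (n₁ + n₂) + 11 : ℤ)) =
      1 / ((k : K) * ((10 * n₁ - 9 : ℤ)) * ((10 * n₂ - 2 : ℤ))) +
        1 / ((k : K) * ((10 * n₁ - 9 : ℤ)) *
          ((4 * k * (10 * n₁ - 9) * (10 * n₂ - 2) - 10 * (n₁ + n₂) + 11 : ℤ))) +
        1 / ((k : K) * ((10 * n₂ - 2 : ℤ)) *
          ((4 * k * (10 * n₁ - 9) * (10 * n₂ - 2) - 10 * (n₁ + n₂) + 11 : ℤ))) := by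
  have hA : 10 * n₁ - 9 ≠ 0 := by lia
  have hB : 10 * n₂ - 2 ≠ 0 := by lia
  have hN_odd : Odd (4 * k * (10 * n₁ - 9) * (10 * n₂ - 2) - 10 * (n₁ + n₂) + 11) :=
    ⟨2 * k * (10 * n₁ - 9) * (10 * n₂ - 2) - 5 * (n₁ + n₂) + 5, by ring⟩
  have hN : 4 * k * (10 * n₁ - 9) * (10 * n₂ - 2) - 10 * (n₁ + n₂) + 11 ≠ 0 :=
    fun hN_zero ↦ by simp [hN_zero] at hN_odd
  refine div_eq_one_div_add_one_div_add_one_div_of_add_add_eq (Int.cast_ne_zero.mpr hk)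
    (Int.cast_ne_zero.mpr hA) (Int.cast_ne_zero.mpr hB) (Int.cast_ne_zero.mpr hN) ?_
  push_cast
  ring

theorem erdos_straus_identity_12 (n₁ n₂ k : ℤ) (h₁ : 0 < n₁) (h₂ : 0 < n₂)
    (hk : 0 < k) :
    (4 : ℚ) / ((4 * k * (10 * n₁ - 9) * (10 * n₂ - 2) - 10 * (n₁ + n₂) + 11 : ℤ)) =
      1 / ((k : ℚ) * ((10 * n₁ - 9 : ℤ)) * ((10 * n₂ - 2 : ℤ))) +
        1 / ((k : ℚ) * ((10 * n₁ - 9 : ℤ)) *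
          ((4 * k * (10 * n₁ - 9) * (10 * n₂ - 2) - 10 * (n₁ + n₂) + 11 : ℤ))) +
        1 / ((k : ℚ) * ((10 * n₂ - 2 : ℤ)) *
          ((4 * k * (10 * n₁ - 9) * (10 * n₂ - 2) - 10 * (n₁ + n₂) + 11 : ℤ))) :=
  erdos_straus_identity_12_general n₁ n₂ hk.ne'
end

section
/- For all positive integers n₁, n₂ and k, writing A = 10n₁−8, B = 10n₂−3, and N = 4k·A·B − 10(n₁+n₂) + 11 (so that N = 4kAB − A − B > 0), the rational number 4/N equals 1/(kAB) + 1/(kA·N) + 1/(kB·N). -/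
theorem div_eq_one_div_add_one_div_add_one_div {K : Type*} [Semifield K] {m k a b N : K}
    (hk : k ≠ 0) (ha : a ≠ 0) (hb : b ≠ 0) (hN : N ≠ 0) (h : N + a + b = m * k * a * b) :
    m / N = 1 / (k * a * b) + 1 / (k * a * N) + 1 / (k * b * N) :=
  calc
    m / N = m * k * a * b / (k * a * b * N) := by field_simp
    _ = (N + a + b) / (k * a * b * N) := by rw [h]
    _ = 1 / (k * a * b) + 1 / (k * a * N) + 1 / (k * b * N) := by field_simp; ring

theorem erdos_straus_identity_13_general (n₁ n₂ : ℤ) {k : ℤ} (hk : k ≠ 0) :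
    (4 : ℚ) / ((4 * k * (10 * n₁ - 8) * (10 * n₂ - 3) - 10 * (n₁ + n₂) + 11 : ℤ)) =
      1 / ((k : ℚ) * ((10 * n₁ - 8 : ℤ)) * ((10 * n₂ - 3 : ℤ))) +
        1 / ((k : ℚ) * ((10 * n₁ - 8 : ℤ)) *
          ((4 * k * (10 * n₁ - 8) * (10 * n₂ - 3) - 10 * (n₁ + n₂) + 11 : ℤ))) +
        1 / ((k : ℚ) * ((10 * n₂ - 3 : ℤ)) *
          ((4 * k * (10 * n₁ - 8) * (10 * n₂ - 3) - 10 * (n₁ + n₂) + 11 : ℤ))) := by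
  have hA : 10 * n₁ - 8 ≠ 0 := by omega
  have hB : 10 * n₂ - 3 ≠ 0 := by omega
  have hN_odd : Odd (4 * k * (10 * n₁ - 8) * (10 * n₂ - 3) - 10 * (n₁ + n₂) + 11) :=
    ⟨2 * k * (10 * n₁ - 8) * (10 * n₂ - 3) - 5 * (n₁ + n₂) + 5, by ring⟩
  apply div_eq_one_div_add_one_div_add_one_div
  · exact Int.cast_ne_zero.mpr hk
  · exact Int.cast_ne_zero.mpr hA
  · exact Int.cast_ne_zero.mpr hB
  · exact Int.cast_ne_zero.mpr fun hN ↦ Int.not_odd_zero (hN ▸ hN_odd)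
  · push_cast
    ring

theorem erdos_straus_identity_13 (n₁ n₂ k : ℤ) (h₁ : 0 < n₁) (h₂ : 0 < n₂)
    (hk : 0 < k) :
    (4 : ℚ) / ((4 * k * (10 * n₁ - 8) * (10 * n₂ - 3) - 10 * (n₁ + n₂) + 11 : ℤ)) =
      1 / ((k : ℚ) * ((10 * n₁ - 8 : ℤ)) * ((10 * n₂ - 3 : ℤ))) +
        1 / ((k : ℚ) * ((10 * n₁ - 8 : ℤ)) *
          ((4 * k * (10 * n₁ - 8) * (10 * n₂ - 3) - 10 * (n₁ + n₂) + 11 : ℤ))) +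
        1 / ((k : ℚ) * ((10 * n₂ - 3 : ℤ)) *
          ((4 * k * (10 * n₁ - 8) * (10 * n₂ - 3) - 10 * (n₁ + n₂) + 11 : ℤ))) :=
  erdos_straus_identity_13_general n₁ n₂ hk.ne'
end

section
/- For all positive integers n₁, n₂ and k, writing A = 10n₁−6, B = 10n₂−5, and N = 4k·A·B − 10(n₁+n₂) + 11 (so that N = 4kAB − A − B > 0), the rational number 4/N equals 1/(kAB) + 1/(kA·N) + 1/(kB·N). -/
/-!
Write `a = 10 * n₁ - 6`, `b = 10 * n₂ - 5` and `N` for the denominator on the left-hand side. Over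
the common denominator `k * a * b * N`, the right-hand side has numerator
`N + a + b = 4 * k * a * b`, so it collapses to `4 / N`. No denominator vanishes: neither `a` nor
`b` is divisible by `10`, and `N` is odd.
-/

theorem div_eq_sum_three_one_div {K : Type*} [Field K] {m k a b N : K}
    (hk : k ≠ 0) (ha : a ≠ 0) (hb : b ≠ 0) (hN : N ≠ 0) (h : N + a + b = m * k * a * b) :
    m / N = 1 / (k * a * b) + 1 / (k * a * N) + 1 / (k * b * N) :=
  calc
    m / N = (m * k * a * b) / (k * a * b * N) := by field_simp
    _ = (N + a + b) / (k * a * b * N) := by rw [h]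
    _ = 1 / (k * a * b) + 1 / (k * a * N) + 1 / (k * b * N) := by field_simp; ring

theorem erdos_straus_identity_14_general {K : Type*} [Field K] [CharZero K]
    (n₁ n₂ k : ℤ) (hk : k ≠ 0) :
    (4 : K) / ((4 * k * (10 * n₁ - 6) * (10 * n₂ - 5) - 10 * (n₁ + n₂) + 11 : ℤ)) =
      1 / ((k : K) * ((10 * n₁ - 6 : ℤ)) * ((10 * n₂ - 5 : ℤ))) +
        1 / ((k : K) * ((10 * n₁ - 6 : ℤ)) *
          ((4 * k * (10 * n₁ - 6) * (10 * n₂ - 5) - 10 * (n₁ + n₂) + 11 : ℤ))) +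
        1 / ((k : K) * ((10 * n₂ - 5 : ℤ)) *
          ((4 * k * (10 * n₁ - 6) * (10 * n₂ - 5) - 10 * (n₁ + n₂) + 11 : ℤ))) := by
  have ha : 10 * n₁ - 6 ≠ 0 := by omega
  have hb : 10 * n₂ - 5 ≠ 0 := by omega
  have hN : Odd (4 * k * (10 * n₁ - 6) * (10 * n₂ - 5) - 10 * (n₁ + n₂) + 11) :=
    ⟨2 * k * (10 * n₁ - 6) * (10 * n₂ - 5) - 5 * (n₁ + n₂) + 5, by ring⟩
  refine div_eq_sum_three_one_div (Int.cast_ne_zero.mpr hk) (Int.cast_ne_zero.mpr ha)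
    (Int.cast_ne_zero.mpr hb) (Int.cast_ne_zero.mpr fun h ↦ by simp [h] at hN) ?_
  push_cast
  ring

theorem erdos_straus_identity_14 (n₁ n₂ k : ℤ) (h₁ : 0 < n₁) (h₂ : 0 < n₂)
    (hk : 0 < k) :
    (4 : ℚ) / ((4 * k * (10 * n₁ - 6) * (10 * n₂ - 5) - 10 * (n₁ + n₂) + 11 : ℤ)) =
      1 / ((k : ℚ) * ((10 * n₁ - 6 : ℤ)) * ((10 * n₂ - 5 : ℤ))) +
        1 / ((k : ℚ) * ((10 * n₁ - 6 : ℤ)) *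
          ((4 * k * (10 * n₁ - 6) * (10 * n₂ - 5) - 10 * (n₁ + n₂) + 11 : ℤ))) +
        1 / ((k : ℚ) * ((10 * n₂ - 5 : ℤ)) *
          ((4 * k * (10 * n₁ - 6) * (10 * n₂ - 5) - 10 * (n₁ + n₂) + 11 : ℤ))) :=
  erdos_straus_identity_14_general n₁ n₂ k hk.ne'
end

section
/- For all positive integers n₁, n₂ and k, writing A = 10n₁−9, B = 10n₂−4, and N = 4k·A·B − 10(n₁+n₂) + 13 (so that N = 4kAB − A − B > 0), the rational number 4/N equals 1/(kAB) + 1/(kA·N) + 1/(kB·N). -/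
theorem div_eq_sum_one_div_of_eq_mul_sub_sub {K : Type*} [Field K] {m k a b N : K}
    (hk : k ≠ 0) (ha : a ≠ 0) (hb : b ≠ 0) (hN₀ : N ≠ 0) (hN : N = m * k * a * b - a - b) :
    m / N = 1 / (k * a * b) + 1 / (k * a * N) + 1 / (k * b * N) := by
  have numerator_eq : m * (k * a * b) = N + b + a := by linear_combination -hN
  calc
    m / N = m * (k * a * b) / (N * (k * a * b)) :=
      (mul_div_mul_right m N (mul_ne_zero (mul_ne_zero hk ha) hb)).symm
    _ = (N + b + a) / (N * (k * a * b)) := by rw [numerator_eq]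
    _ = 1 / (k * a * b) + 1 / (k * a * N) + 1 / (k * b * N) := by field_simp

theorem odd_mul_sub_sub {R : Type*} [Ring R] {a b : R} (c : R) (ha : Odd a) (hb : Even b) :
    Odd (c * b - a - b) :=
  ((hb.mul_left c).sub_odd ha).sub_even hb

theorem erdos_straus_identity_16_general {K : Type*} [Field K] [CharZero K] (n₁ n₂ : ℤ) {k : ℤ}
    (hk : k ≠ 0) :
    (4 : K) / ((4 * k * (10 * n₁ - 9) * (10 * n₂ - 4) - 10 * (n₁ + n₂) + 13 : ℤ)) =
      1 / ((k : K) * ((10 * n₁ - 9 : ℤ)) * ((10 * n₂ - 4 : ℤ))) +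
        1 / ((k : K) * ((10 * n₁ - 9 : ℤ)) *
          ((4 * k * (10 * n₁ - 9) * (10 * n₂ - 4) - 10 * (n₁ + n₂) + 13 : ℤ))) +
        1 / ((k : K) * ((10 * n₂ - 4 : ℤ)) *
          ((4 * k * (10 * n₁ - 9) * (10 * n₂ - 4) - 10 * (n₁ + n₂) + 13 : ℤ))) := by
  have odd_a : Odd (10 * n₁ - 9) := ⟨5 * n₁ - 5, by ring⟩
  have even_b : Even (10 * n₂ - 4) := ⟨5 * n₂ - 2, by ring⟩
  have a_ne_zero : 10 * n₁ - 9 ≠ 0 := by omega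
  have b_ne_zero : 10 * n₂ - 4 ≠ 0 := by omega
  have N_eq : 4 * k * (10 * n₁ - 9) * (10 * n₂ - 4) - 10 * (n₁ + n₂) + 13 =
      4 * k * (10 * n₁ - 9) * (10 * n₂ - 4) - (10 * n₁ - 9) - (10 * n₂ - 4) := by ring
  have odd_N : Odd (4 * k * (10 * n₁ - 9) * (10 * n₂ - 4) - 10 * (n₁ + n₂) + 13) := by
    rw [N_eq]
    exact odd_mul_sub_sub _ odd_a even_b
  have N_ne_zero : 4 * k * (10 * n₁ - 9) * (10 * n₂ - 4) - 10 * (n₁ + n₂) + 13 ≠ 0 :=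
    fun N_eq_zero => Int.not_odd_zero (N_eq_zero ▸ odd_N)
  exact div_eq_sum_one_div_of_eq_mul_sub_sub (Int.cast_ne_zero.mpr hk)
    (Int.cast_ne_zero.mpr a_ne_zero) (Int.cast_ne_zero.mpr b_ne_zero)
    (Int.cast_ne_zero.mpr N_ne_zero) (by exact_mod_cast N_eq)

theorem erdos_straus_identity_16 (n₁ n₂ k : ℤ) (h₁ : 0 < n₁) (h₂ : 0 < n₂)
    (hk : 0 < k) :
    (4 : ℚ) / ((4 * k * (10 * n₁ - 9) * (10 * n₂ - 4) - 10 * (n₁ + n₂) + 13 : ℤ)) =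
      1 / ((k : ℚ) * ((10 * n₁ - 9 : ℤ)) * ((10 * n₂ - 4 : ℤ))) +
        1 / ((k : ℚ) * ((10 * n₁ - 9 : ℤ)) *
          ((4 * k * (10 * n₁ - 9) * (10 * n₂ - 4) - 10 * (n₁ + n₂) + 13 : ℤ))) +
        1 / ((k : ℚ) * ((10 * n₂ - 4 : ℤ)) *
          ((4 * k * (10 * n₁ - 9) * (10 * n₂ - 4) - 10 * (n₁ + n₂) + 13 : ℤ))) :=
  erdos_straus_identity_16_general n₁ n₂ hk.ne'
end

section
/- For all positive integers n₁, n₂ and k, writing A = 10n₁, B = 10n₂−7, and N = 4k·A·B − 10(n₁+n₂) + 7 (so that N = 4kAB − A − B > 0), the rational number 4/N equals 1/(kAB) + 1/(kA·N) + 1/(kB·N). -/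
theorem div_eq_sum_three_unit_fractions {K : Type*} [Field K] {m k a b N : K}
    (hk : k ≠ 0) (ha : a ≠ 0) (hb : b ≠ 0) (hN : N ≠ 0) (h : m * k * a * b = N + a + b) :
    m / N = 1 / (k * a * b) + 1 / (k * a * N) + 1 / (k * b * N) :=
  calc
    m / N = m * k * a * b / (k * a * b * N) := by field_simp
    _ = (N + a + b) / (k * a * b * N) := by rw [h]
    _ = 1 / (k * a * b) + 1 / (k * a * N) + 1 / (k * b * N) := by field_simp; ring

theorem abs_add_le_two_mul_abs_mul {a b : ℤ} (ha : a ≠ 0) (hb : b ≠ 0) :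
    |a + b| ≤ 2 * |a * b| := by
  have abs_left_le : |a| ≤ |a * b| := by
    rw [abs_mul]
    exact le_mul_of_one_le_right (abs_nonneg a) (Int.one_le_abs hb)
  have abs_right_le : |b| ≤ |a * b| := by
    rw [abs_mul]
    exact le_mul_of_one_le_left (abs_nonneg b) (Int.one_le_abs ha)
  linarith [abs_add_le a b]

theorem mul_mul_ne_add_of_two_lt_abs {t a b : ℤ} (ht : 2 < |t|) (ha : a ≠ 0) (hb : b ≠ 0) :
    t * a * b ≠ a + b := by
  refine fun h => lt_irrefl |a + b| ?_
  calc
    |a + b| ≤ 2 * |a * b| := abs_add_le_two_mul_abs_mul ha hb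
    _ < |t| * |a * b| := mul_lt_mul_of_pos_right ht (abs_pos.mpr (mul_ne_zero ha hb))
    _ = |a + b| := by rw [← abs_mul, ← mul_assoc, h]

theorem erdos_straus_identity_18_general {k a b N : ℤ} (hk : k ≠ 0) (ha : a ≠ 0) (hb : b ≠ 0)
    (hN : N = 4 * k * a * b - a - b) :
    (4 : ℚ) / N = 1 / ((k : ℚ) * a * b) + 1 / ((k : ℚ) * a * N) + 1 / ((k : ℚ) * b * N) := by
  have two_lt_abs : 2 < |4 * k| := by
    rw [abs_mul, abs_of_pos (by norm_num : (0 : ℤ) < 4)]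
    linarith [Int.one_le_abs hk]
  have N_ne_zero : N ≠ 0 := fun h =>
    mul_mul_ne_add_of_two_lt_abs two_lt_abs ha hb (by linarith)
  have numerator_eq : 4 * k * a * b = N + a + b := by linarith
  exact div_eq_sum_three_unit_fractions (mod_cast hk) (mod_cast ha) (mod_cast hb)
    (mod_cast N_ne_zero) (mod_cast numerator_eq)

theorem erdos_straus_identity_18 (n₁ n₂ k : ℤ) (h₁ : 0 < n₁) (h₂ : 0 < n₂)
    (hk : 0 < k) :
    (4 : ℚ) / ((4 * k * (10 * n₁) * (10 * n₂ - 7) - 10 * (n₁ + n₂) + 7 : ℤ)) =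
      1 / ((k : ℚ) * ((10 * n₁ : ℤ)) * ((10 * n₂ - 7 : ℤ))) +
        1 / ((k : ℚ) * ((10 * n₁ : ℤ)) *
          ((4 * k * (10 * n₁) * (10 * n₂ - 7) - 10 * (n₁ + n₂) + 7 : ℤ))) +
        1 / ((k : ℚ) * ((10 * n₂ - 7 : ℤ)) *
          ((4 * k * (10 * n₁) * (10 * n₂ - 7) - 10 * (n₁ + n₂) + 7 : ℤ))) := by
  exact erdos_straus_identity_18_general hk.ne' (by lia) (by lia) (by ring)
end
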